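/- Let n > m > 0 be integers with n ≠ 2m, and set d = gcd(n, m). Assume there is no positive integer k with (n = 7k and m = 2k) or (n = 7k and m = 5k). Then there exists g ∈ ℤ[X] such that X^n − 2X^m + 1 = (X^d − 1)·g, g is irreducible in ℤ[X], and g is non-reciprocal (i.e., X^{deg g}·g(1/X) equals neither g nor −g). -/

import Mathlib

open Polynomial

/-!
The method is Ljunggren's. Write `p̃` for the mirror of `p` and `f` for `X^n - 2X^m + 1`. If
`f * f̃ = F * F̃`, then up to sign `F` is monic of degree `n` with constant term `1`, its
coefficients have sum `0` and sum of squares `6`, so it is either `X^n - 2X^i + 1` or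
`X^n + X^a + 1 - X^b - X^c - X^e`. In the first case `F` is `f` or `f̃`. In the second case,
comparing the coefficients of `X^(n+t)` for `t > 0` turns `f * f̃ = F * F̃` into an identity between
multisets of distances between exponents. Its sum of squares and its largest elements leave only
`n = 7b`, `m = 2b` when `2m < n`, which is an excluded case.

Hence `f`, and with it the cofactor `g` of `X^gcd(n,m) - 1`, is determined by its product with its
mirror up to sign and reversal. A common root `x` of `g` and `g̃` would satisfy `x^gcd(n,m) = 1`, so
it would be a double root of `f`, which happens only for `n = 2m`. So `g` and `g̃` are coprime, and
both irreducibility and non-reciprocity follow.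
-/

/-- The exponents of a polynomial `X^n + X^a + 1 - X^b - X^c - X^e` with six distinct terms, the
three negative ones being listed in increasing order. -/
structure HexanomialExponents (n a b c e : ℕ) : Prop where
  a_pos : 0 < a
  a_lt : a < n
  b_pos : 0 < b
  b_lt_c : b < c
  c_lt_e : c < e
  e_lt : e < n
  a_ne_b : a ≠ b
  a_ne_c : a ≠ c
  a_ne_e : a ≠ e

/-- The distances between exponents of `X^n + X^a + 1 - X^b - X^c - X^e` whose coefficients have
opposite signs. -/
def oppositeDistances (n a b c e : ℕ) : Multiset ℕ :=
  {b, c, e, n - b, n - c, n - e, (a - b : ℤ).natAbs, (a - c : ℤ).natAbs, (a - e : ℤ).natAbs}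

/-- The distances between exponents of `X^n + X^a + 1 - X^b - X^c - X^e` whose coefficients have
equal signs, except the distance `n` between the outermost two. -/
def equalDistances (n a b c e : ℕ) : Multiset ℕ :=
  {a, n - a, c - b, e - b, e - c}

/-- The distances between exponents of `X^n - X^m - X^m + 1` whose coefficients have opposite
signs. -/
def trinomialDistances (n m : ℕ) : Multiset ℕ :=
  {n - m, n - m, m, m}

section Distances

variable {n m a b c e : ℕ}

theorem eq_of_mem_oppositeDistances
    (hdist : oppositeDistances n a b c e = equalDistances n a b c e + trinomialDistances n m)
    {x : ℕ} (hx : x ∈ oppositeDistances n a b c e) :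
    x = a ∨ x = n - a ∨ x = c - b ∨ x = e - b ∨ x = e - c ∨ x = n - m ∨ x = m := by
  rw [hdist, Multiset.mem_add] at hx
  simpa only [equalDistances, trinomialDistances, Multiset.insert_eq_cons, Multiset.mem_cons,
    Multiset.mem_singleton, or_assoc, or_self, or_self_left] using hx

theorem two_le_count_oppositeDistances
    (hdist : oppositeDistances n a b c e = equalDistances n a b c e + trinomialDistances n m) :
    2 ≤ (oppositeDistances n a b c e).count (n - m) := by
  rw [hdist, Multiset.count_add]
  exact le_add_left (by simp [trinomialDistances, Multiset.count_cons_self])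

namespace HexanomialExponents

variable (hex : HexanomialExponents n a b c e) (hmn : 2 * m < n)
  (hdist : oppositeDistances n a b c e = equalDistances n a b c e + trinomialDistances n m)

include hex hmn hdist

theorem sum_eq_or_sum_eq : a + n = b + c + e + (n - 2 * m) ∨ b + c + e = a + 2 * (n - m) := by
  obtain ⟨-, han, -, hbc, hce, hen, -, -, -⟩ := hex
  have sum_sq := congrArg (fun s => (s.map fun x : ℕ => (x : ℤ) ^ 2).sum) hdist
  simp only [oppositeDistances, equalDistances, trinomialDistances, Multiset.insert_eq_cons,
    Multiset.map_add, Multiset.map_cons, Multiset.map_singleton, Multiset.sum_add,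
    Multiset.sum_cons, Multiset.sum_singleton, Int.natCast_natAbs, sq_abs] at sum_sq
  push_cast [hen.le, (hce.trans hen).le, (hbc.trans (hce.trans hen)).le, han.le, hbc.le, hce.le,
    (hbc.trans hce).le, show m ≤ n by omega] at sum_sq
  have sq_eq : ((n : ℤ) + a - b - c - e) ^ 2 = (n - 2 * m) ^ 2 := by linear_combination sum_sq
  rw [sq_eq_sq_iff_eq_or_eq_neg] at sq_eq
  omega

variable (hm : 0 < m) (hbe : b + e ≤ n)

include hm hbe

-- The largest opposite distance is `n - b`, and by `hdist` it is at least `n - m`.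
theorem a_eq_sub_or_b_eq : a = n - b ∨ b = m := by
  have b_mem := eq_of_mem_oppositeDistances hdist (x := n - b) (by simp [oppositeDistances])
  have m_mem : n - m ∈ oppositeDistances n a b c e := by simp [hdist, trinomialDistances]
  simp only [oppositeDistances, Multiset.insert_eq_cons, Multiset.mem_cons,
    Multiset.mem_singleton] at m_mem
  cases hex
  clear hdist
  omega

theorem b_ne_m : b ≠ m := by
  rintro rfl
  have count_le := two_le_count_oppositeDistances hdist
  have c_mem := eq_of_mem_oppositeDistances hdist (x := c) (by simp [oppositeDistances])
  have nc_mem := eq_of_mem_oppositeDistances hdist (x := n - c) (by simp [oppositeDistances])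
  have sum_cases := hex.sum_eq_or_sum_eq hmn hdist
  cases hex
  clear hdist
  -- The distance `n - m = n - b` occurs twice, and only `e` can be as large.
  have he : e = n - b := by
    clear c_mem nc_mem sum_cases
    simp only [oppositeDistances, Multiset.insert_eq_cons, Multiset.count_cons,
      Multiset.count_singleton] at count_le
    by_contra
    simp (disch := omega) only [if_neg] at count_le
    split_ifs at count_le <;> omega
  subst he
  clear count_le
  omega

theorem eq_of_a_eq_sub (a_eq : a = n - b) : m = 2 * b ∧ c = 4 * b ∧ e = n - 2 * b := by
  have count_le := two_le_count_oppositeDistances hdist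
  have e_mem := eq_of_mem_oppositeDistances hdist (x := e) (by simp [oppositeDistances])
  have sum_cases := hex.sum_eq_or_sum_eq hmn hdist
  cases hex
  clear hdist
  subst a_eq
  have sum_eq : 2 * b + c + e = n + 2 * m := by omega
  have he : e = n - m := by omega
  subst he
  -- Besides `e`, only `|a - b|` can be equal to the repeated distance `n - m`.
  have hmb : m = 2 * b := by
    clear e_mem
    by_contra
    simp only [oppositeDistances, Multiset.insert_eq_cons, Multiset.count_cons,
      Multiset.count_singleton] at count_le
    simp (disch := omega) only [if_neg, if_true] at count_le
    omega
  omega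

theorem eq_seven_mul : n = 7 * b ∧ m = 2 * b := by
  have a_eq := (hex.a_eq_sub_or_b_eq hmn hdist hm hbe).resolve_right (hex.b_ne_m hmn hdist hm hbe)
  obtain ⟨hmb, hc, he⟩ := hex.eq_of_a_eq_sub hmn hdist hm hbe a_eq
  have c_mem := eq_of_mem_oppositeDistances hdist (x := c) (by simp [oppositeDistances])
  have ac_mem := eq_of_mem_oppositeDistances hdist (x := (a - c : ℤ).natAbs)
    (by simp [oppositeDistances])
  cases hex
  clear hdist
  subst a_eq hmb hc he
  omega

end HexanomialExponents

end Distances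

section Reflect

variable {R : Type*} [Semiring R]

theorem coeff_mul_X_pow_sub (p : R[X]) {n j : ℕ} (hj : j ≤ n) (t : ℕ) :
    (p * X ^ (n - j)).coeff (n + t) = p.coeff (j + t) := by
  rw [show n + t = j + t + (n - j) by omega, coeff_mul_X_pow]

theorem reflect_X_pow {n j : ℕ} (hj : j ≤ n) : reflect n (X ^ j : R[X]) = X ^ (n - j) := by
  rw [reflect_monomial, revAt_le hj]

theorem mirror_eq_reflect {p : R[X]} {n : ℕ} (hp : p.natDegree = n) (h0 : p.coeff 0 ≠ 0) :
    p.mirror = reflect n p := by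
  rw [mirror, natTrailingDegree_eq_zero.mpr (Or.inr h0), pow_zero, mul_one, reverse, hp]

end Reflect

/-- The trinomial `X^n - 2X^m + 1` of Schinzel's theorem. -/
noncomputable def schinzelTrinomial (n m : ℕ) : ℤ[X] :=
  X ^ n - 2 * X ^ m + 1

theorem schinzelTrinomial_eq_trinomial (n m : ℕ) :
    schinzelTrinomial n m = trinomial 0 m n 1 (-2) 1 := by
  rw [schinzelTrinomial, trinomial_def]
  simp only [map_one, map_neg, map_ofNat]
  ring

theorem schinzelTrinomial_coeff (n m k : ℕ) : (schinzelTrinomial n m).coeff k =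
    (if k = n then 1 else 0) - 2 * (if k = m then 1 else 0) + (if k = 0 then 1 else 0) := by
  simp only [schinzelTrinomial, coeff_add, coeff_sub, coeff_ofNat_mul, coeff_X_pow, coeff_one]

theorem schinzelTrinomial_eval_one (n m : ℕ) : (schinzelTrinomial n m).eval 1 = 0 := by
  norm_num [schinzelTrinomial]

theorem zero_notMem_trinomialDistances {n m : ℕ} (hm : 0 < m) (hmn : m < n) :
    0 ∉ trinomialDistances n m := by
  simp only [trinomialDistances, Multiset.insert_eq_cons, Multiset.mem_cons,
    Multiset.mem_singleton]
  omega

section Trinomial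

variable {n m : ℕ} (hm : 0 < m) (hmn : m < n)

include hm hmn

theorem schinzelTrinomial_monic : (schinzelTrinomial n m).Monic :=
  schinzelTrinomial_eq_trinomial n m ▸ trinomial_monic hm hmn

theorem schinzelTrinomial_natDegree : (schinzelTrinomial n m).natDegree = n :=
  schinzelTrinomial_eq_trinomial n m ▸ trinomial_natDegree hm hmn one_ne_zero

theorem schinzelTrinomial_natTrailingDegree : (schinzelTrinomial n m).natTrailingDegree = 0 :=
  schinzelTrinomial_eq_trinomial n m ▸ trinomial_natTrailingDegree hm hmn one_ne_zero

theorem schinzelTrinomial_trailingCoeff : (schinzelTrinomial n m).trailingCoeff = 1 :=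
  schinzelTrinomial_eq_trinomial n m ▸ trinomial_trailingCoeff hm hmn one_ne_zero

theorem schinzelTrinomial_mirror :
    (schinzelTrinomial n m).mirror = schinzelTrinomial n (n - m) := by
  simp only [schinzelTrinomial_eq_trinomial]
  exact trinomial_mirror hm hmn one_ne_zero one_ne_zero

-- The trivial differences are kept so that `coeff_mul_X_pow_sub` applies to every term.
theorem schinzelTrinomial_mirror_eq_X_pow_sub : (schinzelTrinomial n m).mirror =
    X ^ (n - 0) - 2 * X ^ (n - m) + X ^ (n - n) := by
  rw [schinzelTrinomial_mirror hm hmn, schinzelTrinomial, Nat.sub_zero, Nat.sub_self, pow_zero]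

theorem coeff_schinzelTrinomial_mul_mirror_natDegree :
    (schinzelTrinomial n m * (schinzelTrinomial n m).mirror).coeff n = 6 := by
  have coeff_mul {j : ℕ} (hj : j ≤ n) :
      (schinzelTrinomial n m * X ^ (n - j)).coeff n = (schinzelTrinomial n m).coeff j :=
    coeff_mul_X_pow_sub _ hj 0
  rw [schinzelTrinomial_mirror_eq_X_pow_sub hm hmn]
  simp (disch := omega) only [mul_add, mul_sub, mul_left_comm _ (2 : ℤ[X]), coeff_add, coeff_sub,
    coeff_ofNat_mul, coeff_mul, schinzelTrinomial_coeff, if_neg, if_true]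
  norm_num

theorem coeff_schinzelTrinomial_mul_mirror {t : ℕ} (ht : 0 < t) :
    (schinzelTrinomial n m * (schinzelTrinomial n m).mirror).coeff (n + t) =
      (if t = n then 1 else 0) - (trinomialDistances n m).count t := by
  rw [schinzelTrinomial_mirror_eq_X_pow_sub hm hmn]
  have sub_iff : t = n - m ↔ m + t = n := by omega
  simp (disch := omega) only [mul_add, mul_sub, mul_left_comm _ (2 : ℤ[X]), coeff_add, coeff_sub,
    coeff_ofNat_mul, coeff_mul_X_pow_sub, schinzelTrinomial_coeff, trinomialDistances,
    Multiset.insert_eq_cons, Multiset.count_cons, Multiset.count_singleton, sub_iff, if_neg]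
  push_cast
  simp only [zero_add]
  ring

end Trinomial

/-- The polynomial `X^n + X^a + 1 - X^b - X^c - X^e`. -/
noncomputable def hexanomial (n a b c e : ℕ) : ℤ[X] :=
  X ^ n + X ^ a + 1 - X ^ b - X ^ c - X ^ e

theorem hexanomial_coeff (n a b c e k : ℕ) : (hexanomial n a b c e).coeff k =
    (if k = n then 1 else 0) + (if k = a then 1 else 0) + (if k = 0 then 1 else 0)
      - (if k = b then 1 else 0) - (if k = c then 1 else 0) - (if k = e then 1 else 0) := by
  simp only [hexanomial, coeff_sub, coeff_add, coeff_X_pow, coeff_one]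

theorem ite_eq_natAbs_sub (i j : ℕ) {t : ℕ} (ht : 0 < t) :
    (if t = (i - j : ℤ).natAbs then 1 else 0 : ℕ) =
      (if i + t = j then 1 else 0) + (if j + t = i then 1 else 0) := by
  split_ifs <;> omega

namespace HexanomialExponents

variable {n a b c e : ℕ} (hex : HexanomialExponents n a b c e)

include hex

theorem reflect : HexanomialExponents n (n - a) (n - e) (n - c) (n - b) := by
  cases hex
  constructor <;> omega

theorem reflect_hexanomial : (hexanomial n a b c e).reflect n =
    X ^ (n - n) + X ^ (n - a) + X ^ (n - 0) - X ^ (n - b) - X ^ (n - c) - X ^ (n - e) := by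
  cases hex
  rw [hexanomial, ← pow_zero X]
  simp (disch := omega) only [reflect_add, reflect_sub, reflect_X_pow]

theorem reflect_hexanomial_eq_hexanomial : (hexanomial n a b c e).reflect n =
    hexanomial n (n - a) (n - e) (n - c) (n - b) := by
  rw [hex.reflect_hexanomial, hexanomial, Nat.sub_self, Nat.sub_zero]
  ring

theorem coeff_hexanomial_mul_reflect {t : ℕ} (ht : 0 < t) :
    (hexanomial n a b c e * (hexanomial n a b c e).reflect n).coeff (n + t) =
      (if t = n then 1 else 0) + (equalDistances n a b c e).count t -
        (oppositeDistances n a b c e).count t := by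
  rw [hex.reflect_hexanomial]
  cases hex
  have sub_iff {x y : ℕ} (hxy : x ≤ y) : t = y - x ↔ x + t = y := by omega
  simp (disch := omega) only [mul_add, mul_sub, coeff_add, coeff_sub, coeff_mul_X_pow_sub,
    hexanomial_coeff, equalDistances, oppositeDistances, Multiset.insert_eq_cons,
    Multiset.count_cons, Multiset.count_singleton, ite_eq_natAbs_sub _ _ ht, sub_iff, if_neg]
  push_cast
  simp only [zero_add]
  ring

theorem zero_notMem_oppositeDistances : 0 ∉ oppositeDistances n a b c e := by
  cases hex
  simp only [oppositeDistances, Multiset.insert_eq_cons, Multiset.mem_cons,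
    Multiset.mem_singleton]
  omega

theorem zero_notMem_equalDistances : 0 ∉ equalDistances n a b c e := by
  cases hex
  simp only [equalDistances, Multiset.insert_eq_cons, Multiset.mem_cons, Multiset.mem_singleton]
  omega

variable {m : ℕ} (hm : 0 < m)

include hm

theorem oppositeDistances_eq (hmn : m < n)
    (hmul : hexanomial n a b c e * (hexanomial n a b c e).reflect n =
      schinzelTrinomial n m * (schinzelTrinomial n m).mirror) :
    oppositeDistances n a b c e = equalDistances n a b c e + trinomialDistances n m := by
  ext t
  rw [Multiset.count_add]
  rcases t.eq_zero_or_pos with rfl | ht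
  · rw [Multiset.count_eq_zero_of_notMem hex.zero_notMem_oppositeDistances,
      Multiset.count_eq_zero_of_notMem hex.zero_notMem_equalDistances,
      Multiset.count_eq_zero_of_notMem (zero_notMem_trinomialDistances hm hmn)]
  · have coeff_eq := congrArg (coeff · (n + t)) hmul
    simp only [hex.coeff_hexanomial_mul_reflect ht, coeff_schinzelTrinomial_mul_mirror hm hmn ht]
      at coeff_eq
    omega

theorem exists_eq_seven_mul (hmn : 2 * m < n)
    (hmul : hexanomial n a b c e * (hexanomial n a b c e).reflect n =
      schinzelTrinomial n m * (schinzelTrinomial n m).mirror) :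
    ∃ k, 0 < k ∧ n = 7 * k ∧ m = 2 * k := by
  have hmn' : m < n := by omega
  rcases le_or_gt (b + e) n with hbe | hbe
  · exact ⟨b, hex.b_pos, hex.eq_seven_mul hmn (hex.oppositeDistances_eq hm hmn' hmul) hm hbe⟩
  · have hmul' : hexanomial n (n - a) (n - e) (n - c) (n - b) *
        (hexanomial n (n - a) (n - e) (n - c) (n - b)).reflect n =
          schinzelTrinomial n m * (schinzelTrinomial n m).mirror := by
      rw [← hex.reflect_hexanomial_eq_hexanomial, reflect_reflect, mul_comm, hmul]
    exact ⟨n - e, hex.reflect.b_pos, hex.reflect.eq_seven_mul hmn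
      (hex.reflect.oppositeDistances_eq hm hmn' hmul') hm (by omega)⟩

end HexanomialExponents

theorem eq_zero_of_sum_sq_eq_sq {ι R : Type*} [Ring R] [LinearOrder R] [IsStrictOrderedRing R]
    {s : Finset ι} {c : ι → R} {i j : ι} (hsum : ∑ k ∈ s, c k ^ 2 = c i ^ 2) (hi : i ∈ s)
    (hj : j ∈ s) (hij : j ≠ i) : c j = 0 := by
  classical
  rw [← Finset.add_sum_erase s (fun k => c k ^ 2) hi, add_eq_left,
    Finset.sum_eq_zero_iff_of_nonneg fun _ _ => sq_nonneg _] at hsum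
  exact pow_eq_zero_iff two_ne_zero |>.mp (hsum j (Finset.mem_erase.mpr ⟨hij, hj⟩))

section SignPatterns

variable {ι : Type*} {s : Finset ι} {c : ι → ℤ}

theorem sum_zsmul_eq_sum_filter_sub_sum_filter {M : Type*} [AddCommGroup M]
    (hc : ∀ i ∈ s, c i ^ 2 ≤ 1) (g : ι → M) :
    ∑ i ∈ s, c i • g i = ∑ i ∈ s with c i = 1, g i - ∑ i ∈ s with c i = -1, g i := by
  rw [Finset.sum_filter, Finset.sum_filter, ← Finset.sum_sub_distrib]
  refine Finset.sum_congr rfl fun i hi => ?_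
  have hci := abs_le_one_iff_mul_self_le_one.mpr ((sq (c i)).symm.trans_le (hc i hi))
  rcases Int.abs_le_one_iff.mp hci with h | h | h <;> simp [h]

theorem sum_zsmul_eq_of_sum_sq_eq_four {M : Type*} [AddCommGroup M] (g : ι → M)
    (hsq : ∑ i ∈ s, c i ^ 2 = 4) (hsum : ∑ i ∈ s, c i = -2) :
    (∃ i ∈ s, ∑ i ∈ s, c i • g i = (-2 : ℤ) • g i) ∨
      ∃ a ∈ s, ∃ t ⊆ s, a ∉ t ∧ t.card = 3 ∧ ∑ i ∈ s, c i • g i = g a - ∑ i ∈ t, g i := by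
  by_cases hc : ∀ i ∈ s, c i ^ 2 ≤ 1
  · right
    have card_sub := sum_zsmul_eq_sum_filter_sub_sum_filter hc fun _ => (1 : ℤ)
    have card_add := sum_zsmul_eq_sum_filter_sub_sum_filter hc c
    rw [Finset.sum_congr rfl fun i hi => (Finset.mem_filter.mp hi).2, Finset.sum_congr rfl
      fun i (hi : i ∈ s.filter (c · = -1)) => (Finset.mem_filter.mp hi).2] at card_add
    simp only [smul_eq_mul, mul_one, ← sq, hsq, hsum, Finset.sum_const, nsmul_eq_mul, mul_neg]
      at card_sub card_add
    obtain ⟨a, ha⟩ := Finset.card_eq_one.mp (show (s.filter (c · = 1)).card = 1 by omega)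
    have a_mem : a ∈ s.filter (c · = 1) := ha ▸ Finset.mem_singleton_self a
    refine ⟨a, (Finset.mem_filter.mp a_mem).1, s.filter (c · = -1), s.filter_subset _,
      fun h => ?_, by omega, ?_⟩
    · have h1 := (Finset.mem_filter.mp a_mem).2
      have h2 := (Finset.mem_filter.mp h).2
      omega
    · rw [sum_zsmul_eq_sum_filter_sub_sum_filter hc g, ha, Finset.sum_singleton]
  · left
    push Not at hc
    obtain ⟨i, hi, hci⟩ := hc
    have sq_le : c i ^ 2 ≤ 4 := hsq ▸ Finset.single_le_sum (fun k _ => sq_nonneg (c k)) hi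
    have ci_cases : c i = 2 ∨ c i = -2 := by
      have : c i ≤ 2 := by nlinarith
      have : -2 ≤ c i := by nlinarith
      interval_cases c i <;> simp_all
    have sq_eq : c i ^ 2 = 4 := by rcases ci_cases with h | h <;> rw [h] <;> norm_num
    have eq_zero : ∀ j ∈ s, j ≠ i → c j = 0 := fun j hj =>
      eq_zero_of_sum_sq_eq_sq (hsq.trans sq_eq.symm) hi hj
    have hci2 : c i = -2 := by
      rwa [Finset.sum_eq_single_of_mem i hi eq_zero] at hsum
    refine ⟨i, hi, ?_⟩
    rw [Finset.sum_eq_single_of_mem i hi fun j hj hij => by rw [eq_zero j hj hij, zero_smul], hci2]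

end SignPatterns

theorem exists_lt_lt_of_card_eq_three {α : Type*} [LinearOrder α] {t : Finset α}
    (ht : t.card = 3) : ∃ x y z, x < y ∧ y < z ∧ t = {x, y, z} := by
  refine ⟨t.orderEmbOfFin ht 0, t.orderEmbOfFin ht 1, t.orderEmbOfFin ht 2, by simp, by simp, ?_⟩
  simpa [Fin.univ_succ, eq_comm] using t.image_orderEmbOfFin_univ ht

theorem sum_range_succ_eq_add_sum_Ico {M : Type*} [AddCommMonoid M] (f : ℕ → M) {n : ℕ}
    (hn : 0 < n) : ∑ i ∈ Finset.range (n + 1), f i = f 0 + ∑ i ∈ Finset.Ico 1 n, f i + f n := by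
  rw [Finset.sum_range_succ, Finset.range_eq_Ico, Finset.sum_eq_sum_Ico_succ_bot hn]

theorem eq_schinzelTrinomial_or_eq_hexanomial {p : ℤ[X]} {n : ℕ} (hn : 0 < n) (hp : p.Monic)
    (hdeg : p.natDegree = n) (h0 : p.coeff 0 = 1) (heval : p.eval 1 = 0)
    (hsq : ∑ i ∈ Finset.range (n + 1), p.coeff i ^ 2 = 6) :
    (∃ i, 0 < i ∧ i < n ∧ p = schinzelTrinomial n i) ∨
      ∃ a b c e, HexanomialExponents n a b c e ∧ p = hexanomial n a b c e := by
  have hlead : p.coeff n = 1 := hdeg ▸ hp.coeff_natDegree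
  have hsum : ∑ i ∈ Finset.range (n + 1), p.coeff i = 0 := by
    simpa only [eval_eq_sum_range, hdeg, one_pow, mul_one] using heval
  have p_eq : p = 1 + ∑ i ∈ Finset.Ico 1 n, p.coeff i • X ^ i + X ^ n := by
    conv_lhs => rw [p.as_sum_range_C_mul_X_pow, hdeg, sum_range_succ_eq_add_sum_Ico _ hn]
    simp only [h0, hlead, map_one, pow_zero, one_mul, zsmul_eq_mul, eq_intCast]
  rw [sum_range_succ_eq_add_sum_Ico _ hn, h0, hlead] at hsum hsq
  rcases sum_zsmul_eq_of_sum_sq_eq_four (fun i => (X ^ i : ℤ[X])) (by linarith)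
    (by linarith) with ⟨i, hi, sum_eq⟩ | ⟨a, ha, t, hts, hat, ht, sum_eq⟩
  · rw [Finset.mem_Ico] at hi
    refine Or.inl ⟨i, hi.1, hi.2, ?_⟩
    rw [p_eq, sum_eq, schinzelTrinomial]
    simp only [zsmul_eq_mul]
    push_cast
    ring
  · obtain ⟨b, c, e, hbc, hce, rfl⟩ := exists_lt_lt_of_card_eq_three ht
    simp only [Finset.insert_subset_iff, Finset.singleton_subset_iff, Finset.mem_Ico,
      Finset.mem_insert, Finset.mem_singleton, not_or] at ha hts hat
    have hex : HexanomialExponents n a b c e := by constructor <;> omega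
    refine Or.inr ⟨a, b, c, e, hex, ?_⟩
    rw [p_eq, sum_eq, hexanomial, Finset.sum_insert (by simp [hbc.ne, (hbc.trans hce).ne]),
      Finset.sum_insert (by simp [hce.ne]), Finset.sum_singleton]
    ring

section Mirror

variable {R : Type*} [Semiring R] [NoZeroDivisors R] {p q : R[X]}

theorem natDegree_eq_of_mul_mirror_eq (h : p * p.mirror = q * q.mirror) :
    p.natDegree = q.natDegree := by
  have := congrArg natDegree h
  rw [natDegree_mul_mirror, natDegree_mul_mirror] at this
  omega

theorem natTrailingDegree_eq_of_mul_mirror_eq (h : p * p.mirror = q * q.mirror) :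
    p.natTrailingDegree = q.natTrailingDegree := by
  have := congrArg natTrailingDegree h
  rw [natTrailingDegree_mul_mirror, natTrailingDegree_mul_mirror] at this
  omega

theorem leadingCoeff_mul_trailingCoeff_eq_of_mul_mirror_eq (h : p * p.mirror = q * q.mirror) :
    p.leadingCoeff * p.trailingCoeff = q.leadingCoeff * q.trailingCoeff := by
  simpa only [leadingCoeff_mul, mirror_leadingCoeff] using congrArg leadingCoeff h

end Mirror

theorem eval_one_eq_zero_of_mul_mirror_eq {R : Type*} [CommSemiring R] [NoZeroDivisors R]
    {p q : R[X]} (h : p * p.mirror = q * q.mirror) (hq : q.eval 1 = 0) :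
    p.eval 1 = 0 := by
  simpa only [eval_mul, mirror_eval_one, hq, mul_zero, mul_self_eq_zero] using
    congrArg (eval 1) h

theorem sum_sq_coeff_eq_coeff_mul_mirror {R : Type*} [Semiring R] {p : R[X]} {n : ℕ}
    (hdeg : p.natDegree = n) (h0 : p.coeff 0 ≠ 0) :
    ∑ i ∈ Finset.range (n + 1), p.coeff i ^ 2 = (p * p.mirror).coeff n := by
  have h := coeff_mul_mirror p
  rw [natTrailingDegree_eq_zero.mpr (Or.inr h0), add_zero, hdeg,
    sum_over_range' _ (fun _ => zero_pow two_ne_zero) (n + 1) (by omega)] at h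
  exact h.symm

/-- The conclusion of Ljunggren's argument: up to sign and reversal, `p` is the only polynomial
whose product with its own mirror is `p * p.mirror`. It is the hypothesis on `p` in
`Polynomial.irreducible_of_mirror`. -/
def IsMirrorRigid {R : Type*} [CommRing R] (p : R[X]) : Prop :=
  ∀ k, p * p.mirror = k * k.mirror → k = p ∨ k = -p ∨ k = p.mirror ∨ k = -p.mirror

namespace IsMirrorRigid

variable {R : Type*} [CommRing R]

theorem of_mirror {p : R[X]} (hp : IsMirrorRigid p.mirror) : IsMirrorRigid p := by
  intro k hk
  have := hp k (by rw [mirror_mirror, mul_comm, hk])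
  rw [mirror_mirror] at this
  tauto

theorem of_mul_left [NoZeroDivisors R] {d p : R[X]} (hd0 : d ≠ 0) (hd : d.mirror = -d)
    (hp : IsMirrorRigid (d * p)) : IsMirrorRigid p := by
  intro k hk
  have := hp (d * k) (by
    simp only [mirror_mul_of_domain]
    rw [mul_mul_mul_comm, hk, mul_mul_mul_comm])
  rw [mirror_mul_of_domain, hd, neg_mul, neg_neg, ← mul_neg, ← mul_neg] at this
  simp only [mul_right_inj' hd0] at this
  tauto

end IsMirrorRigid

theorem eq_or_eq_sub_of_schinzelTrinomial_mul_mirror_eq {n m i : ℕ} (hm : 0 < m) (hmn : m < n)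
    (hi : 0 < i) (hin : i < n)
    (hmul : schinzelTrinomial n i * (schinzelTrinomial n i).mirror =
      schinzelTrinomial n m * (schinzelTrinomial n m).mirror) : i = m ∨ i = n - m := by
  have coeff_eq := congrArg (coeff · (n + i)) hmul
  simp only [coeff_schinzelTrinomial_mul_mirror hi hin hi,
    coeff_schinzelTrinomial_mul_mirror hm hmn hi] at coeff_eq
  have count_pos : 0 < (trinomialDistances n i).count i :=
    Multiset.count_pos.mpr (by simp [trinomialDistances])
  have i_mem : i ∈ trinomialDistances n m := Multiset.count_pos.mp (by omega)
  simp only [trinomialDistances, Multiset.insert_eq_cons, Multiset.mem_cons,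
    Multiset.mem_singleton] at i_mem
  omega

section Rigidity

variable {n m : ℕ} (hm : 0 < m) (hmn : 2 * m < n)
  (hexc : ∀ k, 0 < k → ¬(n = 7 * k ∧ m = 2 * k))

include hm hmn hexc

theorem eq_or_eq_mirror_of_schinzelTrinomial_mul_mirror_eq {p : ℤ[X]}
    (hmul : schinzelTrinomial n m * (schinzelTrinomial n m).mirror = p * p.mirror)
    (h0 : p.coeff 0 = 1) (hp : p.Monic) :
    p = schinzelTrinomial n m ∨ p = (schinzelTrinomial n m).mirror := by
  have hmn' : m < n := by omega
  have h0' : p.coeff 0 ≠ 0 := h0 ▸ one_ne_zero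
  have hdeg : p.natDegree = n := (natDegree_eq_of_mul_mirror_eq hmul.symm).trans
    (schinzelTrinomial_natDegree hm hmn')
  have heval := eval_one_eq_zero_of_mul_mirror_eq hmul.symm (schinzelTrinomial_eval_one n m)
  have hsq := sum_sq_coeff_eq_coeff_mul_mirror hdeg h0'
  rw [← hmul, coeff_schinzelTrinomial_mul_mirror_natDegree hm hmn'] at hsq
  rcases eq_schinzelTrinomial_or_eq_hexanomial (hm.trans hmn') hp hdeg h0 heval hsq with
    ⟨i, hi, hin, rfl⟩ | ⟨a, b, c, e, hex, rfl⟩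
  · rw [schinzelTrinomial_mirror hm hmn']
    exact (eq_or_eq_sub_of_schinzelTrinomial_mul_mirror_eq hm hmn' hi hin hmul.symm).imp
      (congrArg _) (congrArg _)
  · rw [mirror_eq_reflect hdeg h0'] at hmul
    obtain ⟨k, hk, hnm⟩ := hex.exists_eq_seven_mul hm hmn hmul.symm
    exact absurd hnm (hexc k hk)

theorem isMirrorRigid_schinzelTrinomial_of_two_mul_lt :
    IsMirrorRigid (schinzelTrinomial n m) := by
  intro p hmul
  have hmn' : m < n := by omega
  have htrail : p.natTrailingDegree = 0 := (natTrailingDegree_eq_of_mul_mirror_eq hmul.symm).trans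
    (schinzelTrinomial_natTrailingDegree hm hmn')
  have lead_mul : p.leadingCoeff * p.coeff 0 = 1 := by
    have h := leadingCoeff_mul_trailingCoeff_eq_of_mul_mirror_eq hmul.symm
    rwa [schinzelTrinomial_monic hm hmn', schinzelTrinomial_trailingCoeff hm hmn', one_mul,
      trailingCoeff, htrail] at h
  rcases Int.mul_eq_one_iff_eq_one_or_neg_one.mp lead_mul with ⟨hp, h0⟩ | ⟨hp, h0⟩
  · have := eq_or_eq_mirror_of_schinzelTrinomial_mul_mirror_eq hm hmn hexc hmul h0 hp
    tauto
  · have := eq_or_eq_mirror_of_schinzelTrinomial_mul_mirror_eq hm hmn hexc (p := -p)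
      (by rw [mirror_neg, neg_mul_neg, hmul]) (by rw [coeff_neg, h0, neg_neg])
      (by rw [Monic, leadingCoeff_neg, hp, neg_neg])
    rw [neg_eq_iff_eq_neg, neg_eq_iff_eq_neg] at this
    tauto

end Rigidity

theorem isMirrorRigid_schinzelTrinomial {n m : ℕ} (hm : 0 < m) (hmn : m < n) (hne : n ≠ 2 * m)
    (hexc : ¬ ∃ k, 0 < k ∧ ((n = 7 * k ∧ m = 2 * k) ∨ (n = 7 * k ∧ m = 5 * k))) :
    IsMirrorRigid (schinzelTrinomial n m) := by
  rcases hne.lt_or_gt with h | h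
  · refine IsMirrorRigid.of_mirror ?_
    rw [schinzelTrinomial_mirror hm hmn]
    exact isMirrorRigid_schinzelTrinomial_of_two_mul_lt (by omega) (by omega)
      fun k hk hnm => hexc ⟨k, hk, Or.inr (by omega)⟩
  · exact isMirrorRigid_schinzelTrinomial_of_two_mul_lt hm h
      fun k hk hnm => hexc ⟨k, hk, Or.inl hnm⟩

theorem mirror_X_pow_sub_one {R : Type*} [Ring R] [Nontrivial R] {d : ℕ} (hd : 0 < d) :
    (X ^ d - 1 : R[X]).mirror = -(X ^ d - 1) := by
  have hdeg : (X ^ d - 1 : R[X]).natDegree = d := natDegree_X_pow_sub_C (r := (1 : R))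
  have h0 : (X ^ d - 1 : R[X]).coeff 0 ≠ 0 := by
    simp [coeff_X_pow, hd.ne]
  rw [mirror_eq_reflect hdeg h0, reflect_sub, reflect_X_pow le_rfl, reflect_one, Nat.sub_self,
    pow_zero, neg_sub]

theorem X_pow_gcd_sub_one_dvd_schinzelTrinomial (n m : ℕ) :
    X ^ n.gcd m - 1 ∣ schinzelTrinomial n m := by
  have dvd_of_dvd {k : ℕ} (hk : n.gcd m ∣ k) : (X ^ n.gcd m - 1 : ℤ[X]) ∣ X ^ k - 1 := by
    obtain ⟨q, rfl⟩ := hk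
    simpa only [one_pow, ← pow_mul] using sub_dvd_pow_sub_pow (X ^ n.gcd m : ℤ[X]) 1 q
  have eq_sub : schinzelTrinomial n m = (X ^ n - 1) - 2 * (X ^ m - 1) := by
    rw [schinzelTrinomial]
    ring
  rw [eq_sub]
  exact dvd_sub (dvd_of_dvd (n.gcd_dvd_left m)) ((dvd_of_dvd (n.gcd_dvd_right m)).mul_left 2)

theorem isRelPrime_of_forall_aeval_ne_zero {R : Type*} (K : Type*) [CommRing R]
    [NoZeroDivisors R] [Field K] [IsAlgClosed K] [Algebra R K] {p q : R[X]} (hp : p.Monic)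
    (h : ∀ x : K, aeval x p = 0 → aeval x q ≠ 0) : IsRelPrime p q := by
  intro r hrp hrq
  have hlead : IsUnit r.leadingCoeff :=
    isUnit_of_dvd_one (hp.leadingCoeff ▸ leadingCoeff_dvd_leadingCoeff hrp)
  refine isUnit_of_isUnit_leadingCoeff_of_isUnit_map (algebraMap R K) hlead ?_
  rw [isUnit_iff_degree_eq_zero]
  by_contra hdeg
  obtain ⟨x, hx⟩ := IsAlgClosed.exists_root _ hdeg
  rw [IsRoot, eval_map_algebraMap] at hx
  exact h x (aeval_eq_zero_of_dvd_aeval_eq_zero hrp hx) (aeval_eq_zero_of_dvd_aeval_eq_zero hrq hx)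

section Roots

variable {R : Type*} [CommRing R] {x : R} {n m : ℕ}

theorem aeval_schinzelTrinomial (x : R) (n m : ℕ) :
    aeval x (schinzelTrinomial n m) = x ^ n - 2 * x ^ m + 1 := by
  simp only [schinzelTrinomial, map_add, map_sub, map_mul, map_pow, aeval_X, map_ofNat, map_one]

theorem pow_gcd_eq_one_of_common_root [NoZeroDivisors R] [NeZero (2 : R)] (hmn : m ≤ n)
    (h : x ^ n - 2 * x ^ m + 1 = 0) (h' : x ^ n - 2 * x ^ (n - m) + 1 = 0) : x ^ n.gcd m = 1 := by
  have pow_eq : x ^ (n - m) = x ^ m := mul_left_cancel₀ two_ne_zero (by linear_combination h - h')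
  have pow_mul : x ^ n = x ^ m * x ^ m := by
    nth_rw 2 [← pow_eq]
    rw [← pow_add, Nat.add_sub_cancel' hmn]
  have hxm : x ^ m = 1 := by
    rw [← sub_eq_zero, ← sq_eq_zero_iff]
    linear_combination h - pow_mul
  exact pow_gcd_eq_one.mpr ⟨by rw [pow_mul, hxm, one_mul], hxm⟩

theorem eq_two_mul_of_aeval_derivative_eq_zero [CharZero R] (hm : 0 < m) (hmn : m < n)
    (hx : x ^ n.gcd m = 1) (h : aeval x (derivative (schinzelTrinomial n m)) = 0) :
    n = 2 * m := by
  obtain ⟨hxn, hxm⟩ := pow_gcd_eq_one.mp hx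
  have hxn' : x * x ^ (n - 1) = 1 := by rw [mul_pow_sub_one (by omega), hxn]
  have hxm' : x * x ^ (m - 1) = 1 := by rw [mul_pow_sub_one hm.ne', hxm]
  simp only [schinzelTrinomial, derivative_mul, derivative_X_pow, derivative_ofNat, derivative_one,
    map_add, map_sub, map_mul, map_pow, map_natCast, map_ofNat, map_zero, aeval_X] at h
  have : (n : R) = 2 * m := by linear_combination x * h - (n : R) * hxn' + 2 * (m : R) * hxm'
  exact_mod_cast this

end Roots

theorem isRelPrime_mirror_of_schinzelTrinomial_eq {n m : ℕ} (hm : 0 < m) (hmn : m < n)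
    (hne : n ≠ 2 * m) {g : ℤ[X]} (hg : schinzelTrinomial n m = (X ^ n.gcd m - 1) * g) :
    IsRelPrime g g.mirror := by
  have hgcd : 0 < n.gcd m := Nat.gcd_pos_of_pos_right n hm
  have hg_monic : g.Monic := (monic_X_pow_sub_C (1 : ℤ) hgcd.ne').of_mul_monic_left
    (by simpa only [map_one, ← hg] using schinzelTrinomial_monic hm hmn)
  refine isRelPrime_of_forall_aeval_ne_zero ℂ hg_monic fun x hx hx' => hne ?_
  have root : aeval x (schinzelTrinomial n m) = 0 := by rw [hg, map_mul, hx, mul_zero]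
  have mirror_root : aeval x (schinzelTrinomial n (n - m)) = 0 := by
    rw [← schinzelTrinomial_mirror hm hmn, hg, mirror_mul_of_domain, map_mul, hx', mul_zero]
  rw [aeval_schinzelTrinomial] at root mirror_root
  have hx_gcd := pow_gcd_eq_one_of_common_root hmn.le root mirror_root
  refine eq_two_mul_of_aeval_derivative_eq_zero hm hmn hx_gcd ?_
  rw [hg, derivative_mul, map_add, map_mul, map_mul, hx, mul_zero, map_sub, map_pow, aeval_X,
    hx_gcd, map_one, sub_self, zero_mul, add_zero]

theorem reverse_ne_of_isRelPrime_mirror {R : Type*} [CommRing R] {p : R[X]} (hu : ¬IsUnit p)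
    (hp : IsRelPrime p p.mirror) : p.reverse ≠ p ∧ p.reverse ≠ -p := by
  have not_dvd : ¬p ∣ p.reverse := fun h => hu (hp dvd_rfl (h.mul_right _))
  exact ⟨fun h => not_dvd h.symm.dvd, fun h => not_dvd (h ▸ (dvd_refl p).neg_right)⟩

theorem not_isUnit_of_schinzelTrinomial_eq {n m : ℕ} (hm : 0 < m) (hmn : m < n) {g : ℤ[X]}
    (hg : schinzelTrinomial n m = (X ^ n.gcd m - 1) * g) : ¬IsUnit g := by
  intro hu
  have hdeg := congrArg natDegree hg
  have hle := natDegree_mul_le (p := X ^ n.gcd m - 1) (q := g)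
  rw [← hdeg, schinzelTrinomial_natDegree hm hmn, natDegree_eq_zero_of_isUnit hu, ← C_1,
    natDegree_X_pow_sub_C, add_zero] at hle
  exact absurd (hle.trans (Nat.gcd_le_right n hm)) hmn.not_ge

/-- Schinzel's theorem on `X^n - 2X^m + 1`: outside the two exceptional families,
`X^n - 2X^m + 1 = (X^gcd(n,m) - 1)·g` with `g` irreducible and non-reciprocal. -/
theorem schinzel_trinomial (n m : ℕ) (hm : 0 < m) (hmn : m < n) (hne : n ≠ 2 * m)
    (hexc : ¬ ∃ k : ℕ, 0 < k ∧ ((n = 7 * k ∧ m = 2 * k) ∨ (n = 7 * k ∧ m = 5 * k))) :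
    ∃ g : Polynomial ℤ,
      (X : Polynomial ℤ) ^ n - 2 * X ^ m + 1 = (X ^ (Nat.gcd n m) - 1) * g ∧
      Irreducible g ∧ g.reverse ≠ g ∧ g.reverse ≠ -g := by
  obtain ⟨g, hg⟩ := X_pow_gcd_sub_one_dvd_schinzelTrinomial n m
  have hgcd : 0 < n.gcd m := Nat.gcd_pos_of_pos_right n hm
  have hu : ¬IsUnit g := not_isUnit_of_schinzelTrinomial_eq hm hmn hg
  have hrel : IsRelPrime g g.mirror := isRelPrime_mirror_of_schinzelTrinomial_eq hm hmn hne hg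
  have hrigid : IsMirrorRigid g := by
    refine IsMirrorRigid.of_mul_left (X_pow_sub_C_ne_zero hgcd 1) (mirror_X_pow_sub_one hgcd) ?_
    simpa only [map_one, ← hg] using isMirrorRigid_schinzelTrinomial hm hmn hne hexc
  exact ⟨g, hg, irreducible_of_mirror hu hrigid hrel, reverse_ne_of_isRelPrime_mirror hu hrel⟩
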